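/- arXiv:2007.05456 — 5 statements merged into one kernel-verified Lean document; each statement's English description precedes it below -/
import Mathlib

section
/- Freedman's inequality: Let (X_n)_{n≥1} be a martingale difference sequence with respect to a filtration (F_n)_{n≥0} on a probability space (i.e., each X_n is F_n-measurable and E[X_n | F_{n-1}] = 0 almost surely), and suppose |X_n| ≤ a almost surely for all n, for some constant a > 0. Then for every δ ∈ (0,1), with probability at least 1 − δ it holds simultaneously for all n ≥ 1 that |∑_{i=1}^n X_i| ≤ 2·sqrt( (∑_{i=1}^n Var[X_i | F_{i-1}]) · ln(4n/δ) ) + 4a·ln(4n/δ), where Var[X_i | F_{i-1}] = E[X_i² | F_{i-1}] denotes the conditional variance. -/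
open MeasureTheory Finset

/-!
For an increment `X ≤ 1` with nonpositive conditional mean, `exp x ≤ 1 + x + 3 / 4 * x ^ 2` bounds
the conditional expectation of `exp X` by `exp (3 / 4 * E[X ^ 2 | ·])`. Hence `exp (S - 3 / 4 * V)`
is a supermartingale, `V` being the sum of the conditional variances, and Ville's maximal inequality
shows that `S` ever reaches the line `L + 3 / 4 * V` with probability at most `exp (-L)`. After
rescaling, this is a family of lines `c * L + 3 / 4 * V / c`, one for each scale `c ≥ a`.

The best scale is of order `√(V / L)` and thus random. A union bound over the scales `2 ^ k * a`,
weighted by `2 ^ (-k)`, makes available some `c ≤ √(V / L) < 2 * c` (or `c = a`, if `√(V / L) < a`);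
`3 / 4` is the largest constant for which the line at every such `c` stays below `2 * √(V * L)`.
Since `V ≤ n * a ^ 2`, the scale needed at time `n` satisfies `2 ^ k ≤ n`, so that its weight is
absorbed by the `n` in `log (4 * n / δ)`.
-/

lemma exp_le_one_add_self_add_sq {x : ℝ} (hx : x ≤ 1) : Real.exp x ≤ 1 + x + 3 / 4 * x ^ 2 := by
  rcases le_total (-1) x with hx' | hx'
  · have habs : |x| ≤ 1 := abs_le.mpr ⟨hx', hx⟩
    have htaylor := (abs_le.mp (Real.exp_bound habs (n := 3) (by norm_num))).2
    have hcube : |x| ^ 3 ≤ x ^ 2 := by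
      simpa using pow_le_pow_of_le_one (abs_nonneg x) habs (show 2 ≤ 3 by norm_num)
    norm_num [sum_range_succ, Nat.factorial] at htaylor
    linarith [sq_nonneg x]
  · have hexp : Real.exp x ≤ 2 / 3 :=
      (Real.exp_le_exp.mpr hx').trans (Real.exp_neg_one_lt_d9.le.trans (by norm_num))
    nlinarith [sq_nonneg (x + 2 / 3)]

lemma exists_two_pow_le_and_add_sq_div_le {x : ℝ} (hx : 1 ≤ x) :
    ∃ k : ℕ, 2 ^ k ≤ x ∧ 2 ^ k + 3 / 4 * x ^ 2 / 2 ^ k ≤ 2 * x := by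
  obtain ⟨k, hk_le, hk_lt⟩ := exists_nat_pow_near hx one_lt_two
  rw [pow_succ] at hk_lt
  refine ⟨k, hk_le, ?_⟩
  rw [← le_sub_iff_add_le', div_le_iff₀ (by positivity)]
  nlinarith [mul_nonneg (sub_nonneg.mpr hk_le) (sub_nonneg.mpr hk_lt.le)]

/-- The boundary of Freedman's inequality for increments at most `a`, when the conditional variances
add up to `v` and the logarithmic term is `L`. -/
noncomputable def freedmanBound (a v L : ℝ) : ℝ := 2 * √(v * L) + 4 * a * L

lemma exists_two_pow_scale_le_freedmanBound {a v L : ℝ} {n : ℕ} (ha : 0 < a) (hn : 1 ≤ n)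
    (hv : v ≤ n * a ^ 2) (hL : 1 / 2 ≤ L) :
    ∃ k : ℕ, 2 ^ k ≤ n ∧ 2 ^ k * a * L + 3 / 4 * (v / (2 ^ k * a)) ≤ freedmanBound a v L := by
  rcases le_or_gt v (a ^ 2 * L) with hsmall | hlarge
  · refine ⟨0, by simpa using hn, ?_⟩
    have hdiv : v / a ≤ a * L := by
      rw [div_le_iff₀ ha]
      linarith
    have haL : 0 < a * L := by positivity
    simp only [freedmanBound, pow_zero, one_mul]
    linarith [Real.sqrt_nonneg (v * L)]
  · have hL0 : 0 < L := by linarith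
    -- Up to a constant factor, `x * a` is the scale `c` minimising `c * L + 3 / 4 * (v / c)`.
    obtain ⟨x, hx, rfl⟩ : ∃ x, 1 ≤ x ∧ v = (x * a) ^ 2 * L := by
      refine ⟨√(v / L) / a, ?_, ?_⟩
      · rw [one_le_div ha]
        exact Real.le_sqrt_of_sq_le ((le_div_iff₀ hL0).mpr hlarge.le)
      · have hv0 : 0 ≤ v := le_trans (by positivity) hlarge.le
        rw [div_mul_cancel₀ _ ha.ne', Real.sq_sqrt (by positivity), div_mul_cancel₀ _ hL0.ne']
    obtain ⟨k, hkx, hk⟩ := exists_two_pow_le_and_add_sq_div_le hx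
    refine ⟨k, ?_, ?_⟩
    · have hxn : x ^ 2 * L ≤ n := by
        refine le_of_mul_le_mul_right ?_ (pow_pos ha 2)
        linarith
      by_contra! hlt
      have hnk : (n : ℝ) + 1 ≤ 2 ^ k := by exact_mod_cast hlt
      nlinarith
    · have hsqrt : √((x * a) ^ 2 * L * L) = x * a * L := by
        rw [show (x * a) ^ 2 * L * L = (x * a * L) ^ 2 by ring, Real.sqrt_sq (by positivity)]
      have haL : 0 < a * L := by positivity
      calc 2 ^ k * a * L + 3 / 4 * ((x * a) ^ 2 * L / (2 ^ k * a))
          = a * L * (2 ^ k + 3 / 4 * x ^ 2 / 2 ^ k) := by field_simp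
        _ ≤ a * L * (2 * x) := by gcongr
        _ ≤ freedmanBound a ((x * a) ^ 2 * L) L := by
          rw [freedmanBound, hsqrt]
          linarith

section Probability

variable {Ω : Type*} {m : MeasurableSpace Ω} {μ : Measure Ω} {ℱ : Filtration ℕ m}

lemma integral_stoppedValue_le_integral_zero [SigmaFiniteFiltration μ ℱ] {M : ℕ → Ω → ℝ}
    (hM : Supermartingale M ℱ μ) {τ : Ω → ℕ∞} (hτ : IsStoppingTime ℱ τ) {N : ℕ}
    (hτN : ∀ ω, τ ω ≤ N) :
    ∫ ω, stoppedValue M τ ω ∂μ ≤ ∫ ω, M 0 ω ∂μ := by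
  have hneg := hM.neg.expected_stoppedValue_mono (isStoppingTime_const ℱ 0) hτ
    (fun ω ↦ zero_le (a := τ ω)) hτN
  simpa [stoppedValue, integral_neg] using hneg

lemma ville_maximal_ineq_of_horizon [IsFiniteMeasure μ] {M : ℕ → Ω → ℝ}
    (hM : Supermartingale M ℱ μ) (hnonneg : 0 ≤ M) {C : ℝ} (hC : 0 < C) (N : ℕ) :
    μ {ω | ∃ n ≤ N, C ≤ M n ω} ≤ ENNReal.ofReal ((∫ ω, M 0 ω ∂μ) / C) := by
  set τ : Ω → ℕ∞ := fun ω ↦ (hittingBtwn M (Set.Ici C) 0 N ω : ℕ)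
  have hτ : IsStoppingTime ℱ τ :=
    hM.stronglyAdapted.adapted.isStoppingTime_hittingBtwn measurableSet_Ici
  have hτN (ω : Ω) : τ ω ≤ N := Nat.cast_le.mpr (hittingBtwn_le ω)
  have hint : Integrable (stoppedValue M τ) μ :=
    integrable_neg_iff.mp (hM.neg.integrable_stoppedValue hτ hτN)
  have hmarkov := mul_meas_ge_le_integral_of_nonneg
    (ae_of_all μ fun ω ↦ hnonneg _ ω : 0 ≤ᵐ[μ] stoppedValue M τ) hint C
  calc μ {ω | ∃ n ≤ N, C ≤ M n ω}
      ≤ μ {ω | C ≤ stoppedValue M τ ω} := by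
        refine measure_mono ?_
        rintro ω ⟨n, hn, hCn⟩
        exact stoppedValue_hittingBtwn_mem (s := Set.Ici C) ⟨n, ⟨n.zero_le, hn⟩, hCn⟩
    _ = ENNReal.ofReal (μ.real {ω | C ≤ stoppedValue M τ ω}) := by rw [ofReal_measureReal]
    _ ≤ ENNReal.ofReal ((∫ ω, M 0 ω ∂μ) / C) := by
        gcongr
        rw [le_div_iff₀' hC]
        exact hmarkov.trans (integral_stoppedValue_le_integral_zero hM hτ hτN)

theorem ville_maximal_ineq [IsFiniteMeasure μ] {M : ℕ → Ω → ℝ}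
    (hM : Supermartingale M ℱ μ) (hnonneg : 0 ≤ M) {C : ℝ} (hC : 0 < C) :
    μ {ω | ∃ n, C ≤ M n ω} ≤ ENNReal.ofReal ((∫ ω, M 0 ω ∂μ) / C) := by
  have hUnion : {ω | ∃ n, C ≤ M n ω} = ⋃ N : ℕ, {ω | ∃ n ≤ N, C ≤ M n ω} := by
    ext ω
    simpa using ⟨fun ⟨n, hn⟩ ↦ ⟨n, n, le_rfl, hn⟩, fun ⟨_, n, _, hn⟩ ↦ ⟨n, hn⟩⟩
  have hmono : Monotone fun N : ℕ ↦ {ω | ∃ n ≤ N, C ≤ M n ω} :=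
    fun _ _ hNN' _ ⟨n, hn, hCn⟩ ↦ ⟨n, hn.trans hNN', hCn⟩
  rw [hUnion, hmono.measure_iUnion]
  exact iSup_le (ville_maximal_ineq_of_horizon hM hnonneg hC)

lemma supermartingale_prod_range [IsFiniteMeasure μ] {Z : ℕ → Ω → ℝ}
    (hmeas : ∀ i, StronglyMeasurable[ℱ (i + 1)] (Z i)) (hnonneg : 0 ≤ Z)
    (hint : ∀ i, Integrable (Z i) μ) (hprod : ∀ n, Integrable (∏ i ∈ range n, Z i) μ)
    (hcond : ∀ i, μ[Z i | ℱ i] ≤ᵐ[μ] 1) :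
    Supermartingale (fun n ↦ ∏ i ∈ range n, Z i) ℱ μ := by
  have hadapted (n : ℕ) : StronglyMeasurable[ℱ n] (∏ i ∈ range n, Z i) :=
    Finset.stronglyMeasurable_prod _ fun i hi ↦ (hmeas i).mono (ℱ.mono (mem_range.mp hi))
  refine supermartingale_nat hadapted hprod fun n ↦ ?_
  have hpull : μ[(∏ i ∈ range n, Z i) * Z n | ℱ n] =ᵐ[μ] (∏ i ∈ range n, Z i) * μ[Z n | ℱ n] :=
    condExp_mul_of_stronglyMeasurable_left (hadapted n)
      (by simpa only [prod_range_succ] using hprod (n + 1)) (hint n)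
  rw [prod_range_succ]
  filter_upwards [hpull, hcond n] with ω hpullω hcondω
  rw [hpullω]
  refine mul_le_of_le_one_right ?_ hcondω
  rw [Finset.prod_apply]
  exact prod_nonneg fun i _ ↦ hnonneg i ω

lemma integrable_exp_of_ae_le [IsFiniteMeasure μ] {X : Ω → ℝ} {C : ℝ}
    (hX : AEStronglyMeasurable X μ) (hle : ∀ᵐ ω ∂μ, X ω ≤ C) :
    Integrable (fun ω ↦ Real.exp (X ω)) μ := by
  refine .of_bound (Real.continuous_exp.comp_aestronglyMeasurable hX) (Real.exp C) ?_
  filter_upwards [hle] with ω hω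
  simpa using hω

lemma condExp_exp_le_exp_condExp_sq [IsFiniteMeasure μ] {m' : MeasurableSpace Ω} (hm : m' ≤ m)
    {X : Ω → ℝ} (hX : MemLp X 2 μ) (hle : ∀ᵐ ω ∂μ, X ω ≤ 1) (hmean : μ[X | m'] ≤ᵐ[μ] 0) :
    μ[fun ω ↦ Real.exp (X ω) | m'] ≤ᵐ[μ] fun ω ↦ Real.exp (3 / 4 * (μ[X ^ 2 | m']) ω) := by
  have hint : Integrable X μ := hX.integrable one_le_two
  have hone : Integrable (1 : Ω → ℝ) μ := integrable_const 1
  have hsq : Integrable ((3 / 4 : ℝ) • X ^ 2) μ := hX.integrable_sq.smul _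
  have htaylor : μ[fun ω ↦ Real.exp (X ω) | m'] ≤ᵐ[μ] μ[1 + X + (3 / 4 : ℝ) • X ^ 2 | m'] := by
    refine condExp_mono (integrable_exp_of_ae_le hint.1 hle) ((hone.add hint).add hsq) ?_
    filter_upwards [hle] with ω hω using exp_le_one_add_self_add_sq hω
  have hone_eq : μ[(1 : Ω → ℝ) | m'] = 1 := condExp_const hm 1
  filter_upwards [htaylor, hmean, condExp_add (hone.add hint) hsq m', condExp_add hone hint m',
    condExp_smul (μ := μ) (3 / 4 : ℝ) (X ^ 2) m'] with ω htaylorω hmeanω hadd hadd_one hsmul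
  rw [hadd, Pi.add_apply, hadd_one, hsmul, hone_eq] at htaylorω
  simp only [Pi.add_apply, Pi.one_apply, Pi.smul_apply, smul_eq_mul] at htaylorω
  rw [Pi.zero_apply] at hmeanω
  linarith [Real.add_one_le_exp (3 / 4 * (μ[X ^ 2 | m']) ω)]

lemma ae_sub_condExp_sq_le_one {m' : MeasurableSpace Ω} {X : Ω → ℝ} (hle : ∀ᵐ ω ∂μ, X ω ≤ 1) :
    ∀ᵐ ω ∂μ, X ω - 3 / 4 * (μ[X ^ 2 | m']) ω ≤ 1 := by
  have hnonneg : 0 ≤ᵐ[μ] μ[X ^ 2 | m'] := condExp_nonneg (ae_of_all μ fun ω ↦ sq_nonneg (X ω))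
  filter_upwards [hle, hnonneg] with ω hω hnonnegω
  rw [Pi.zero_apply] at hnonnegω
  linarith

lemma condExp_exp_sub_condExp_sq_le_one [IsFiniteMeasure μ] {m' : MeasurableSpace Ω} (hm : m' ≤ m)
    {X : Ω → ℝ} (hX : MemLp X 2 μ) (hle : ∀ᵐ ω ∂μ, X ω ≤ 1) (hmean : μ[X | m'] ≤ᵐ[μ] 0) :
    μ[fun ω ↦ Real.exp (X ω - 3 / 4 * (μ[X ^ 2 | m']) ω) | m'] ≤ᵐ[μ] 1 := by
  set W : Ω → ℝ := fun ω ↦ Real.exp (-(3 / 4 * (μ[X ^ 2 | m']) ω))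
  have hfactor : (fun ω ↦ Real.exp (X ω - 3 / 4 * (μ[X ^ 2 | m']) ω)) =
      W * fun ω ↦ Real.exp (X ω) := by
    ext ω
    simp only [W, Pi.mul_apply, ← Real.exp_add]
    ring_nf
  have hW : StronglyMeasurable[m'] W :=
    Real.continuous_exp.comp_stronglyMeasurable (stronglyMeasurable_condExp.const_mul _).neg
  have hint : Integrable (W * fun ω ↦ Real.exp (X ω)) μ := hfactor ▸ integrable_exp_of_ae_le
    (hX.1.sub (integrable_condExp.1.const_mul _)) (ae_sub_condExp_sq_le_one hle)
  rw [hfactor]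
  filter_upwards [condExp_mul_of_stronglyMeasurable_left hW hint (integrable_exp_of_ae_le hX.1 hle),
    condExp_exp_le_exp_condExp_sq hm hX hle hmean] with ω hpull hω
  rw [hpull, Pi.mul_apply]
  calc W ω * (μ[fun ω ↦ Real.exp (X ω) | m']) ω
      ≤ W ω * Real.exp (3 / 4 * (μ[X ^ 2 | m']) ω) := by gcongr
    _ = 1 := by simp [W, ← Real.exp_add]

lemma condExp_sq_le_of_ae_abs_le [IsFiniteMeasure μ] {m' : MeasurableSpace Ω} (hm : m' ≤ m)
    {X : Ω → ℝ} {a : ℝ} (hX : MemLp X 2 μ) (hbdd : ∀ᵐ ω ∂μ, |X ω| ≤ a) :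
    ∀ᵐ ω ∂μ, (μ[X ^ 2 | m']) ω ≤ a ^ 2 := by
  have hmono : μ[X ^ 2 | m'] ≤ᵐ[μ] μ[fun _ ↦ a ^ 2 | m'] := by
    refine condExp_mono hX.integrable_sq (integrable_const _) ?_
    filter_upwards [hbdd] with ω hω using sq_le_sq.mpr (hω.trans (le_abs_self a))
  rwa [condExp_const hm] at hmono

/-- The sum `∑_{i < n} E[X_i ^ 2 | ℱ_i]` of the conditional variances of a martingale difference
sequence, where the increment `X i` is revealed at time `i + 1`. -/
noncomputable def predictableQuadVar (μ : Measure Ω) (ℱ : Filtration ℕ m) (X : ℕ → Ω → ℝ) (n : ℕ)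
    (ω : Ω) : ℝ :=
  ∑ i ∈ range n, (μ[X i ^ 2 | ℱ i]) ω

lemma predictableQuadVar_neg (X : ℕ → Ω → ℝ) :
    predictableQuadVar μ ℱ (-X) = predictableQuadVar μ ℱ X := by
  ext n ω
  simp only [predictableQuadVar, Pi.neg_apply, neg_sq]

lemma ae_predictableQuadVar_const_smul (c : ℝ) (X : ℕ → Ω → ℝ) :
    ∀ᵐ ω ∂μ, ∀ n, predictableQuadVar μ ℱ (c • X) n ω = c ^ 2 * predictableQuadVar μ ℱ X n ω := by
  have hterm : ∀ᵐ ω ∂μ, ∀ i, (μ[(c • X) i ^ 2 | ℱ i]) ω = c ^ 2 * (μ[X i ^ 2 | ℱ i]) ω := by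
    refine ae_all_iff.mpr fun i ↦ ?_
    rw [Pi.smul_apply, smul_pow]
    exact condExp_smul (c ^ 2) (X i ^ 2) (ℱ i)
  filter_upwards [hterm] with ω hω n
  simp only [predictableQuadVar, hω, mul_sum]

lemma ae_predictableQuadVar_le {X : ℕ → Ω → ℝ} {b : ℝ}
    (hX : ∀ i, ∀ᵐ ω ∂μ, (μ[X i ^ 2 | ℱ i]) ω ≤ b) :
    ∀ᵐ ω ∂μ, ∀ n, predictableQuadVar μ ℱ X n ω ≤ n * b := by
  filter_upwards [ae_all_iff.mpr hX] with ω hω n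
  calc predictableQuadVar μ ℱ X n ω ≤ ∑ _i ∈ range n, b := sum_le_sum fun i _ ↦ hω i
    _ = n * b := by simp

/-- Square-integrable supermartingale difference sequences with respect to `ℱ`, where the increment
`X i` is revealed at time `i + 1`. These carry the one-sided bounds; a martingale difference
sequence is one for which both `X` and `-X` have this property. -/
structure IsSupermartingaleDiff (X : ℕ → Ω → ℝ) (ℱ : Filtration ℕ m) (μ : Measure Ω) : Prop where
  stronglyMeasurable (i : ℕ) : StronglyMeasurable[ℱ (i + 1)] (X i)
  memLp (i : ℕ) : MemLp (X i) 2 μ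
  condExp_nonpos (i : ℕ) : μ[X i | ℱ i] ≤ᵐ[μ] 0

namespace IsSupermartingaleDiff

variable {X : ℕ → Ω → ℝ}

lemma const_smul (hX : IsSupermartingaleDiff X ℱ μ) {c : ℝ} (hc : 0 ≤ c) :
    IsSupermartingaleDiff (c • X) ℱ μ where
  stronglyMeasurable i := (hX.stronglyMeasurable i).const_smul c
  memLp i := (hX.memLp i).const_smul c
  condExp_nonpos i := by
    filter_upwards [condExp_smul (μ := μ) c (X i) (ℱ i), hX.condExp_nonpos i] with ω hsmul hω
    rw [Pi.smul_apply, hsmul]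
    exact mul_nonpos_of_nonneg_of_nonpos hc hω

lemma supermartingale_exp [IsFiniteMeasure μ] (hX : IsSupermartingaleDiff X ℱ μ)
    (hle : ∀ i, ∀ᵐ ω ∂μ, X i ω ≤ 1) :
    Supermartingale
      (fun n ω ↦ Real.exp (∑ i ∈ range n, X i ω - 3 / 4 * predictableQuadVar μ ℱ X n ω)) ℱ μ := by
  set Y : ℕ → Ω → ℝ := fun i ω ↦ X i ω - 3 / 4 * (μ[X i ^ 2 | ℱ i]) ω
  have hYmeas (i : ℕ) : StronglyMeasurable[ℱ (i + 1)] (Y i) := (hX.stronglyMeasurable i).sub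
    ((stronglyMeasurable_condExp.mono (ℱ.mono i.le_succ)).const_mul _)
  have hYmeas' (i : ℕ) : AEStronglyMeasurable (Y i) μ :=
    ((hYmeas i).mono (ℱ.le _)).aestronglyMeasurable
  have hYle (i : ℕ) : ∀ᵐ ω ∂μ, Y i ω ≤ 1 := ae_sub_condExp_sq_le_one (hle i)
  have hprod (n : ℕ) : ∏ i ∈ range n, (fun ω ↦ Real.exp (Y i ω)) =
      fun ω ↦ Real.exp (∑ i ∈ range n, Y i ω) := by
    ext ω
    rw [Finset.prod_apply, Real.exp_sum]
  have hprod_int (n : ℕ) : Integrable (∏ i ∈ range n, fun ω ↦ Real.exp (Y i ω)) μ := by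
    rw [hprod]
    refine integrable_exp_of_ae_le (C := n)
      (Finset.aestronglyMeasurable_fun_sum _ fun i _ ↦ hYmeas' i) ?_
    filter_upwards [ae_all_iff.mpr hYle] with ω hω
    simpa using sum_le_card_nsmul (range n) (Y · ω) 1 fun i _ ↦ hω i
  have hsuper := supermartingale_prod_range
    (fun i ↦ Real.continuous_exp.comp_stronglyMeasurable (hYmeas i))
    (fun i ω ↦ (Real.exp_pos (Y i ω)).le) (fun i ↦ integrable_exp_of_ae_le (hYmeas' i) (hYle i))
    hprod_int (fun i ↦ condExp_exp_sub_condExp_sq_le_one (ℱ.le i) (hX.memLp i) (hle i)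
      (hX.condExp_nonpos i))
  simpa only [hprod, Y, sum_sub_distrib, ← mul_sum, predictableQuadVar] using hsuper

theorem measure_exists_add_predictableQuadVar_le_sum_le [IsProbabilityMeasure μ]
    (hX : IsSupermartingaleDiff X ℱ μ) (hle : ∀ i, ∀ᵐ ω ∂μ, X i ω ≤ 1) (L : ℝ) :
    μ {ω | ∃ n, L + 3 / 4 * predictableQuadVar μ ℱ X n ω ≤ ∑ i ∈ range n, X i ω} ≤
      ENNReal.ofReal (Real.exp (-L)) := by
  have hville := ville_maximal_ineq (hX.supermartingale_exp hle)
    (fun n ω ↦ (Real.exp_pos _).le) (Real.exp_pos L)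
  simpa [Real.exp_neg, le_sub_iff_add_le, predictableQuadVar] using hville

theorem measure_exists_mul_add_predictableQuadVar_div_le_sum_le [IsProbabilityMeasure μ]
    (hX : IsSupermartingaleDiff X ℱ μ) {c : ℝ} (hc : 0 < c) (hle : ∀ i, ∀ᵐ ω ∂μ, X i ω ≤ c)
    (L : ℝ) :
    μ {ω | ∃ n, c * L + 3 / 4 * (predictableQuadVar μ ℱ X n ω / c) ≤ ∑ i ∈ range n, X i ω} ≤
      ENNReal.ofReal (Real.exp (-L)) := by
  have hle' (i : ℕ) : ∀ᵐ ω ∂μ, (c⁻¹ • X) i ω ≤ 1 := by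
    filter_upwards [hle i] with ω hω
    simpa [inv_mul_le_iff₀ hc] using hω
  refine le_trans (measure_mono_ae ?_) ((hX.const_smul (inv_nonneg.mpr hc.le)
    ).measure_exists_add_predictableQuadVar_le_sum_le hle' L)
  filter_upwards [ae_predictableQuadVar_const_smul (μ := μ) (ℱ := ℱ) c⁻¹ X] with ω hω
  rintro ⟨n, hn⟩
  refine ⟨n, ?_⟩
  simp only [hω, Pi.smul_apply, smul_eq_mul, ← mul_sum]
  calc L + 3 / 4 * (c⁻¹ ^ 2 * predictableQuadVar μ ℱ X n ω)
      = c⁻¹ * (c * L + 3 / 4 * (predictableQuadVar μ ℱ X n ω / c)) := by field_simp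
    _ ≤ c⁻¹ * ∑ i ∈ range n, X i ω := by gcongr

theorem measure_exists_freedmanBound_lt_sum_le [IsProbabilityMeasure μ]
    (hX : IsSupermartingaleDiff X ℱ μ) {a δ : ℝ} (ha : 0 < a) (hδ : δ ∈ Set.Ioc 0 1)
    (hle : ∀ i, ∀ᵐ ω ∂μ, X i ω ≤ a) (hvar : ∀ i, ∀ᵐ ω ∂μ, (μ[X i ^ 2 | ℱ i]) ω ≤ a ^ 2) :
    μ {ω | ∃ n : ℕ, 1 ≤ n ∧ freedmanBound a (predictableQuadVar μ ℱ X n ω) (Real.log (2 * n / δ)) <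
      ∑ i ∈ range n, X i ω} ≤ ENNReal.ofReal δ := by
  obtain ⟨hδ0, hδ1⟩ := hδ
  set E : ℕ → Set Ω := fun k ↦ {ω | ∃ n, 2 ^ k * a * Real.log (2 * 2 ^ k / δ) +
    3 / 4 * (predictableQuadVar μ ℱ X n ω / (2 ^ k * a)) ≤ ∑ i ∈ range n, X i ω}
  have hE (k : ℕ) : μ (E k) ≤ ENNReal.ofReal (δ / 2 / 2 ^ k) := by
    have hle_scale (i : ℕ) : ∀ᵐ ω ∂μ, X i ω ≤ 2 ^ k * a := by
      filter_upwards [hle i] with ω hω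
      exact hω.trans (le_mul_of_one_le_left ha.le (one_le_pow₀ one_le_two))
    refine (hX.measure_exists_mul_add_predictableQuadVar_div_le_sum_le (by positivity) hle_scale
      (Real.log (2 * 2 ^ k / δ))).trans_eq ?_
    rw [Real.exp_neg, Real.exp_log (by positivity), inv_div, div_div]
  have hcover : {ω | ∃ n : ℕ, 1 ≤ n ∧ freedmanBound a (predictableQuadVar μ ℱ X n ω)
      (Real.log (2 * n / δ)) < ∑ i ∈ range n, X i ω} ≤ᵐ[μ] ⋃ k, E k := by
    filter_upwards [ae_predictableQuadVar_le hvar] with ω hV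
    rintro ⟨n, hn, hlt⟩
    have hn' : (1 : ℝ) ≤ n := mod_cast hn
    have hL : 1 / 2 ≤ Real.log (2 * n / δ) := by
      have hlog : Real.log 2 ≤ Real.log (2 * n / δ) := by
        refine Real.log_le_log two_pos ((le_div_iff₀ hδ0).mpr ?_)
        nlinarith
      linarith [Real.log_two_gt_d9]
    obtain ⟨k, hkn, hk⟩ := exists_two_pow_scale_le_freedmanBound ha hn (hV n) hL
    have hkn' : (2 : ℝ) ^ k ≤ n := mod_cast hkn
    refine Set.mem_iUnion.mpr ⟨k, n, le_trans ?_ (hk.trans hlt.le)⟩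
    gcongr
  calc _ ≤ μ (⋃ k, E k) := measure_mono_ae hcover
    _ ≤ ∑' k, μ (E k) := measure_iUnion_le E
    _ ≤ ∑' k : ℕ, ENNReal.ofReal (δ / 2 / 2 ^ k) := ENNReal.tsum_le_tsum hE
    _ = ENNReal.ofReal δ := by
      rw [← ENNReal.ofReal_tsum_of_nonneg (fun k ↦ by positivity) (summable_geometric_two' δ),
        tsum_geometric_two']

end IsSupermartingaleDiff

lemma isSupermartingaleDiff_of_ae_abs_le [IsFiniteMeasure μ] {X : ℕ → Ω → ℝ} {a : ℝ}
    (hmeas : ∀ i, StronglyMeasurable[ℱ (i + 1)] (X i)) (hbdd : ∀ i, ∀ᵐ ω ∂μ, |X i ω| ≤ a)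
    (hmean : ∀ i, μ[X i | ℱ i] ≤ᵐ[μ] 0) : IsSupermartingaleDiff X ℱ μ where
  stronglyMeasurable := hmeas
  memLp i := .of_bound ((hmeas i).mono (ℱ.le _)).aestronglyMeasurable a (hbdd i)
  condExp_nonpos := hmean

theorem measure_exists_freedmanBound_lt_abs_sum_le [IsProbabilityMeasure μ] {X : ℕ → Ω → ℝ}
    {a δ : ℝ} (ha : 0 < a) (hδ : δ ∈ Set.Ioc 0 1)
    (hmeas : ∀ i, StronglyMeasurable[ℱ (i + 1)] (X i)) (hbdd : ∀ i, ∀ᵐ ω ∂μ, |X i ω| ≤ a)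
    (hmean : ∀ i, μ[X i | ℱ i] =ᵐ[μ] 0) :
    μ {ω | ∃ n : ℕ, 1 ≤ n ∧ freedmanBound a (predictableQuadVar μ ℱ X n ω) (Real.log (4 * n / δ)) <
      |∑ i ∈ range n, X i ω|} ≤ ENNReal.ofReal δ := by
  have hδ2 : δ / 2 ∈ Set.Ioc 0 1 := ⟨by linarith [hδ.1], by linarith [hδ.2]⟩
  have hbdd_neg (i : ℕ) : ∀ᵐ ω ∂μ, |(-X) i ω| ≤ a := by simpa using hbdd i
  have hmean_neg (i : ℕ) : μ[(-X) i | ℱ i] ≤ᵐ[μ] 0 := by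
    filter_upwards [condExp_neg (μ := μ) (X i) (ℱ i), hmean i] with ω hneg hω
    simp [hneg, hω]
  have hX := isSupermartingaleDiff_of_ae_abs_le hmeas hbdd fun i ↦ (hmean i).le
  have hX_neg : IsSupermartingaleDiff (-X) ℱ μ :=
    isSupermartingaleDiff_of_ae_abs_le (fun i ↦ (hmeas i).neg) hbdd_neg hmean_neg
  have hupper := hX.measure_exists_freedmanBound_lt_sum_le ha hδ2
    (fun i ↦ (hbdd i).mono fun _ ↦ le_of_abs_le)
    (fun i ↦ condExp_sq_le_of_ae_abs_le (ℱ.le i) (hX.memLp i) (hbdd i))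
  have hlower := hX_neg.measure_exists_freedmanBound_lt_sum_le ha hδ2
    (fun i ↦ (hbdd_neg i).mono fun _ ↦ le_of_abs_le)
    (fun i ↦ condExp_sq_le_of_ae_abs_le (ℱ.le i) (hX_neg.memLp i) (hbdd_neg i))
  have hlog (n : ℕ) : 2 * n / (δ / 2) = 4 * n / δ := by ring
  simp only [hlog, predictableQuadVar_neg, Pi.neg_apply, sum_neg_distrib] at hupper hlower
  calc _ ≤ _ := by
        refine (measure_mono ?_).trans (measure_union_le _ _)
        rintro ω ⟨n, hn, hlt⟩
        exact (lt_abs.mp hlt).imp (fun h ↦ ⟨n, hn, h⟩) (fun h ↦ ⟨n, hn, h⟩)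
    _ ≤ ENNReal.ofReal (δ / 2) + ENNReal.ofReal (δ / 2) := add_le_add hupper hlower
    _ = ENNReal.ofReal δ := by rw [← ENNReal.ofReal_add hδ2.1.le hδ2.1.le, add_halves]

lemma ofReal_one_sub_le_measure_of_measure_compl_le [IsProbabilityMeasure μ] {s : Set Ω} {δ : ℝ}
    (hδ : 0 ≤ δ) (hs : μ sᶜ ≤ ENNReal.ofReal δ) : ENNReal.ofReal (1 - δ) ≤ μ s := by
  rw [ENNReal.ofReal_sub _ hδ, ENNReal.ofReal_one, tsub_le_iff_right, ← measure_univ (μ := μ)]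
  exact (measure_univ_le_add_compl s).trans (by gcongr)

end Probability

lemma sum_Icc_one_eq_sum_range {M : Type*} [AddCommMonoid M] (f : ℕ → M) (n : ℕ) :
    ∑ i ∈ Icc 1 n, f i = ∑ i ∈ range n, f (i + 1) := by
  rw [range_eq_Ico, sum_Ico_add' f 0 n 1]
  rfl

/-- Freedman's inequality for bounded martingale difference sequences. -/
theorem freedman_inequality
    {Ω : Type*} {m : MeasurableSpace Ω} (μ : Measure Ω) [IsProbabilityMeasure μ]
    (ℱ : MeasureTheory.Filtration ℕ m) (X : ℕ → Ω → ℝ) (a : ℝ) (ha : 0 < a)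
    (hint : ∀ n, Integrable (X n) μ)
    (hmeas : ∀ n, 1 ≤ n → StronglyMeasurable[ℱ n] (X n))
    (hmds : ∀ n, 1 ≤ n → μ[X n | ℱ (n - 1)] =ᵐ[μ] 0)
    (hbdd : ∀ n, 1 ≤ n → ∀ᵐ ω ∂μ, |X n ω| ≤ a)
    (δ : ℝ) (hδ : δ ∈ Set.Ioo (0 : ℝ) 1) :
    ENNReal.ofReal (1 - δ) ≤
      μ {ω | ∀ n, 1 ≤ n →
        |∑ i ∈ Finset.Icc 1 n, X i ω| ≤
          2 * Real.sqrt ((∑ i ∈ Finset.Icc 1 n, (μ[(X i) ^ 2 | ℱ (i - 1)]) ω) *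
              Real.log (4 * n / δ)) +
            4 * a * Real.log (4 * n / δ)} := by
  have hbad := measure_exists_freedmanBound_lt_abs_sum_le (X := fun i ↦ X (i + 1)) ha
    (Set.Ioo_subset_Ioc_self hδ) (fun i ↦ hmeas (i + 1) i.succ_pos)
    (fun i ↦ hbdd (i + 1) i.succ_pos) (fun i ↦ hmds (i + 1) i.succ_pos)
  refine ofReal_one_sub_le_measure_of_measure_compl_le hδ.1.le (le_trans (measure_mono ?_) hbad)
  intro ω hω
  simpa [freedmanBound, predictableQuadVar, sum_Icc_one_eq_sum_range] using hω
end

section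
/- Let S be a finite set, let p : S → [0,1] be a probability vector whose support {s ∈ S : p(s) > 0} has cardinality Γ ≥ 1, and let w : S → ℝ. Then ∑_{s∈S} sqrt( p(s)·(1 − p(s))·w(s)² ) ≤ sqrt( (Γ − 1) · ∑_{s∈S} p(s)·w(s)² ). -/
open Finset

/-!
On the support of `p`, the Cauchy–Schwarz inequality is applied to the weights `1 - p s` and
`p s * w s ^ 2`; for a probability vector the former sum to `Γ - 1`. Every summand vanishes off the
support, so the restriction costs nothing.
-/

theorem sum_sqrt_mul_le_sqrt_sum_mul_sum {ι : Type*} (T : Finset ι) {f g : ι → ℝ}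
    (hf : ∀ i ∈ T, 0 ≤ f i) (hg : ∀ i ∈ T, 0 ≤ g i) :
    ∑ i ∈ T, √(f i * g i) ≤ √((∑ i ∈ T, f i) * ∑ i ∈ T, g i) :=
  Real.le_sqrt_of_sq_le <| sum_sq_le_sum_mul_sum_of_sq_le_mul T hf hg fun i hi ↦
    (Real.sq_sqrt (mul_nonneg (hf i hi) (hg i hi))).le

theorem sum_sqrt_mul_one_sub_mul_sq_le_sqrt_card_sub_sum {ι : Type*} (T : Finset ι)
    {p : ι → ℝ} (w : ι → ℝ) (hp0 : ∀ i ∈ T, 0 ≤ p i) (hp1 : ∀ i ∈ T, p i ≤ 1) :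
    ∑ i ∈ T, √(p i * (1 - p i) * w i ^ 2) ≤
      √((#T - ∑ i ∈ T, p i) * ∑ i ∈ T, p i * w i ^ 2) :=
  calc ∑ i ∈ T, √(p i * (1 - p i) * w i ^ 2)
    _ = ∑ i ∈ T, √((1 - p i) * (p i * w i ^ 2)) := by
      simp only [mul_comm (p _) (1 - p _), mul_assoc]
    _ ≤ √((∑ i ∈ T, (1 - p i)) * ∑ i ∈ T, p i * w i ^ 2) :=
      sum_sqrt_mul_le_sqrt_sum_mul_sum T (fun i hi ↦ sub_nonneg.mpr (hp1 i hi))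
        fun i hi ↦ mul_nonneg (hp0 i hi) (sq_nonneg _)
    _ = √((#T - ∑ i ∈ T, p i) * ∑ i ∈ T, p i * w i ^ 2) := by
      rw [sum_sub_distrib, sum_const, nsmul_one]

theorem sum_sqrt_le_sqrt_support_general {ι : Type*} (T : Finset ι) {p : ι → ℝ} (w : ι → ℝ)
    (hp0 : ∀ i ∈ T, 0 ≤ p i) (hp1 : ∀ i ∈ T, p i ≤ 1) :
    ∑ i ∈ T, √(p i * (1 - p i) * w i ^ 2) ≤
      √((#{i ∈ T | 0 < p i} - ∑ i ∈ T, p i) * ∑ i ∈ T, p i * w i ^ 2) := by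
  have sum_support {f : ι → ℝ} (hf : ∀ i, p i = 0 → f i = 0) :
      ∑ i ∈ T with 0 < p i, f i = ∑ i ∈ T, f i :=
    sum_filter_of_ne fun i hi hfi ↦ (hp0 i hi).lt_of_ne' (mt (hf i) hfi)
  have on_support := sum_sqrt_mul_one_sub_mul_sq_le_sqrt_card_sub_sum {i ∈ T | 0 < p i} w
    (fun i hi ↦ hp0 i (mem_of_mem_filter i hi)) fun i hi ↦ hp1 i (mem_of_mem_filter i hi)
  rwa [sum_support fun i hi ↦ by simp [hi], sum_support fun _ ↦ id,
    sum_support fun i hi ↦ by simp [hi]] at on_support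

/-- Lemma 3 (bounded support): for a probability vector `p` with support of size `Γ ≥ 1`,
`∑_s sqrt(p(s)(1 - p(s)) w(s)²) ≤ sqrt((Γ - 1) ∑_s p(s) w(s)²)`. -/
theorem sum_sqrt_le_sqrt_support
    {S : Type*} [Fintype S] (p w : S → ℝ) (Γ : ℕ)
    (hp0 : ∀ s, 0 ≤ p s) (hp1 : ∑ s, p s = 1)
    (hΓ : (Finset.univ.filter fun s => 0 < p s).card = Γ) (hΓ1 : 1 ≤ Γ) :
    ∑ s, Real.sqrt (p s * (1 - p s) * w s ^ 2) ≤
      Real.sqrt ((Γ - 1 : ℝ) * ∑ s, p s * w s ^ 2) := by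
  have hp_le_one (s : S) : p s ≤ 1 := hp1 ▸ single_le_sum (fun i _ ↦ hp0 i) (mem_univ s)
  simpa only [hΓ, hp1] using
    sum_sqrt_le_sqrt_support_general univ w (fun s _ ↦ hp0 s) fun s _ ↦ hp_le_one s
end

section
/- Let (ν_k)_{k≥1} be a sequence of nonnegative real numbers and define N_1 = 0 and N_{k+1} = N_k + ν_k for all k ≥ 1. Assume that ν_k ≤ max(1, N_k) for every k ≥ 1. Then for every K ≥ 1, ∑_{k=1}^{K} ν_k / sqrt(max(1, N_k)) ≤ 3·sqrt(N_{K+1}). -/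
open Finset

/-!
Since `b - a = (√b - √a) (√b + √a)`, the quotient `(b - a) / √m` is at most `C (√b - √a)` as soon
as `√a + √b ≤ C √m`. For `a = N k`, `b = N (k + 1)` and `m = max 1 (N k)`, doubling gives `b ≤ 2 m`,
so that `C = 1 + √2 ≤ 3` works, and the resulting bounds on the summands telescope.
-/

lemma sub_div_sqrt_le_mul_sqrt_sub_sqrt {a b m c : ℝ} (ha : 0 ≤ a) (hab : a ≤ b) (hm : 0 < m)
    (ham : a ≤ m) (hbm : b ≤ c * m) :
    (b - a) / √m ≤ (1 + √c) * (√b - √a) := by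
  have sqrt_add_le : √b + √a ≤ (1 + √c) * √m :=
    calc
      √b + √a ≤ √(c * m) + √m := by gcongr
      _ = (1 + √c) * √m := by rw [Real.sqrt_mul' c hm.le]; ring
  rw [div_le_iff₀ (Real.sqrt_pos.mpr hm)]
  calc
    b - a = (√b - √a) * (√b + √a) := by
      rw [mul_comm, ← mul_self_sub_mul_self, Real.mul_self_sqrt (ha.trans hab),
        Real.mul_self_sqrt ha]
    _ ≤ (√b - √a) * ((1 + √c) * √m) :=
      mul_le_mul_of_nonneg_left sqrt_add_le (sub_nonneg.mpr (Real.sqrt_le_sqrt hab))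
    _ = (1 + √c) * (√b - √a) * √m := by ring

theorem sum_div_sqrt_le_general {ν N M : ℕ → ℝ} {c : ℝ} (hν0 : ∀ k, 1 ≤ k → 0 ≤ ν k)
    (hN1 : 0 ≤ N 1) (hNrec : ∀ k, 1 ≤ k → N (k + 1) = N k + ν k)
    (hM : ∀ k, 1 ≤ k → 0 < M k) (hNM : ∀ k, 1 ≤ k → N k ≤ M k)
    (hgrowth : ∀ k, 1 ≤ k → N (k + 1) ≤ c * M k) (K : ℕ) :
    ∑ k ∈ Icc 1 K, ν k / √(M k) ≤ (1 + √c) * (√(N (K + 1)) - √(N 1)) := by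
  have N_le_succ : ∀ k, 1 ≤ k → N k ≤ N (k + 1) := fun k hk ↦ by
    simpa only [hNrec k hk] using le_add_of_nonneg_right (hν0 k hk)
  have N_nonneg : ∀ k, 1 ≤ k → 0 ≤ N k := fun k hk ↦
    hN1.trans (monotoneOn_nat_Ici_of_le_succ N_le_succ Set.self_mem_Ici hk hk)
  calc
    ∑ k ∈ Icc 1 K, ν k / √(M k)
      ≤ ∑ k ∈ Icc 1 K, (1 + √c) * (√(N (k + 1)) - √(N k)) := by
        refine sum_le_sum fun k hk ↦ ?_
        have one_le_k : 1 ≤ k := (mem_Icc.mp hk).1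
        rw [← sub_eq_of_eq_add' (hNrec k one_le_k)]
        exact sub_div_sqrt_le_mul_sqrt_sub_sqrt (N_nonneg k one_le_k) (N_le_succ k one_le_k)
          (hM k one_le_k) (hNM k one_le_k) (hgrowth k one_le_k)
    _ = (1 + √c) * (√(N (K + 1)) - √(N 1)) := by
        rw [← mul_sum, ← Ico_add_one_right_eq_Icc, sum_Ico_sub (fun k ↦ √(N k)) (by lia)]

/-- Under the episode-doubling condition `ν_k ≤ max(1, N_k)`, where `N_1 = 0` and
`N_{k+1} = N_k + ν_k`, we have `∑_{k=1}^K ν_k / sqrt(max(1, N_k)) ≤ 3 sqrt(N_{K+1})`. -/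
theorem sum_div_sqrt_le
    (ν N : ℕ → ℝ) (hν0 : ∀ k, 1 ≤ k → 0 ≤ ν k)
    (hN1 : N 1 = 0) (hNrec : ∀ k, 1 ≤ k → N (k + 1) = N k + ν k)
    (hdouble : ∀ k, 1 ≤ k → ν k ≤ max 1 (N k)) (K : ℕ) (hK : 1 ≤ K) :
    ∑ k ∈ Finset.Icc 1 K, ν k / Real.sqrt (max 1 (N k)) ≤ 3 * Real.sqrt (N (K + 1)) := by
  calc
    ∑ k ∈ Icc 1 K, ν k / √(max 1 (N k)) ≤ (1 + √2) * (√(N (K + 1)) - √(N 1)) :=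
      sum_div_sqrt_le_general hν0 hN1.ge hNrec (fun k _ ↦ by positivity)
        (fun k _ ↦ le_max_right 1 (N k))
        (fun k hk ↦ by linarith [hNrec k hk, hdouble k hk, le_max_right 1 (N k)]) K
    _ ≤ 3 * √(N (K + 1)) := by
      rw [hN1, Real.sqrt_zero, sub_zero]
      gcongr
      linarith [Real.sqrt_two_lt_three_halves]
end

section
/- Let (ν_k)_{k≥1} be a sequence of nonnegative real numbers and define N_1 = 0 and N_{k+1} = N_k + ν_k for all k ≥ 1. Assume that ν_k ≤ max(1, N_k) for every k ≥ 1. Then for every K ≥ 1, ∑_{k=1}^{K} ν_k / max(1, N_k) ≤ 2 + 2·ln(max(1, N_{K+1})). -/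
open Finset

/-!
The sum telescopes against `Φ x = min 1 x + c log_{1+c} (max 1 x)`, with `c = 1` under the
doubling condition. Below `1` the denominator is `1` and `Φ` is the identity. Above `1`, Bernoulli's
inequality `(1 + c) ^ t ≤ 1 + c t` for `0 ≤ t ≤ 1` gives `r - 1 ≤ c log_{1+c} r` for growth ratios
`1 ≤ r ≤ 1 + c`, with equality at `r = 1 + c`, and the logarithm turns ratios into differences
of `Φ`. A step that crosses `1` ends in `[1, 1 + c]`, so the same inequality covers it.
-/

/-- The potential whose increments bound the summands `ν_k / max 1 N_k` when
`ν_k ≤ c * max 1 N_k`; it continues the identity on `(-∞, 1]` by a logarithm. The episode-doubling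
condition is the case `c = 1`. -/
noncomputable def growthPotential (c x : ℝ) : ℝ :=
  min 1 x + c * Real.logb (1 + c) (max 1 x)

section GrowthPotential

variable {c x y : ℝ}

theorem growthPotential_of_le_one (hx : x ≤ 1) : growthPotential c x = x := by
  simp [growthPotential, hx]

theorem growthPotential_of_one_le (hx : 1 ≤ x) :
    growthPotential c x = 1 + c * Real.logb (1 + c) x := by
  simp [growthPotential, hx]

theorem growthPotential_nonneg (hc : 0 ≤ c) (hx : 0 ≤ x) : 0 ≤ growthPotential c x :=
  add_nonneg (le_min zero_le_one hx) <| mul_nonneg hc <|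
    div_nonneg (Real.log_nonneg (le_max_left 1 x)) (Real.log_nonneg (le_add_of_nonneg_right hc))

theorem growthPotential_le_one_add_mul_logb :
    growthPotential c x ≤ 1 + c * Real.logb (1 + c) (max 1 x) := by
  unfold growthPotential
  gcongr
  exact min_le_left 1 x

theorem sub_one_le_mul_logb_one_add (hc : 0 < c) (hx : 1 ≤ x) (hxc : x ≤ 1 + c) :
    x - 1 ≤ c * Real.logb (1 + c) x := by
  have bernoulli : (1 + c) ^ ((x - 1) / c) ≤ x :=
    calc (1 + c) ^ ((x - 1) / c) ≤ 1 + (x - 1) / c * c :=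
          rpow_one_add_le_one_add_mul_self (by linarith)
            (div_nonneg (by linarith) hc.le) ((div_le_one hc).2 (by linarith))
      _ = x := by rw [div_mul_cancel₀ _ hc.ne', add_sub_cancel]
  rw [← div_le_iff₀' hc]
  exact (Real.le_logb_iff_rpow_le (by linarith) (by linarith)).2 bernoulli

theorem sub_div_le_mul_logb_sub_logb (hc : 0 < c) (hx : 0 < x) (hxy : x ≤ y)
    (hgrowth : y - x ≤ c * x) :
    (y - x) / x ≤ c * (Real.logb (1 + c) y - Real.logb (1 + c) x) :=
  calc (y - x) / x = y / x - 1 := by rw [sub_div, div_self hx.ne']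
    _ ≤ c * Real.logb (1 + c) (y / x) :=
        sub_one_le_mul_logb_one_add hc ((one_le_div hx).2 hxy) ((div_le_iff₀ hx).2 (by linarith))
    _ = c * (Real.logb (1 + c) y - Real.logb (1 + c) x) := by
        rw [Real.logb_div (hx.trans_le hxy).ne' hx.ne']

theorem sub_div_max_one_le_growthPotential_sub (hc : 0 < c) (hxy : x ≤ y)
    (hgrowth : y - x ≤ c * max 1 x) :
    (y - x) / max 1 x ≤ growthPotential c y - growthPotential c x := by
  rcases le_total x 1 with hx | hx
  · rw [max_eq_left hx] at hgrowth ⊢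
    rw [growthPotential_of_le_one hx, div_one]
    rcases le_total y 1 with hy | hy
    · rw [growthPotential_of_le_one hy]
    · rw [growthPotential_of_one_le hy]
      linarith [sub_one_le_mul_logb_one_add hc hy (by linarith)]
  · rw [max_eq_right hx] at hgrowth ⊢
    rw [growthPotential_of_one_le hx, growthPotential_of_one_le (hx.trans hxy),
      add_sub_add_left_eq_sub, ← mul_sub]
    exact sub_div_le_mul_logb_sub_logb hc (by linarith) hxy hgrowth

theorem sum_Ico_sub_div_max_one_le_growthPotential_sub (hc : 0 < c) {N : ℕ → ℝ} {m n : ℕ}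
    (hmn : m ≤ n) (hmono : ∀ k ∈ Ico m n, N k ≤ N (k + 1))
    (hgrowth : ∀ k ∈ Ico m n, N (k + 1) - N k ≤ c * max 1 (N k)) :
    ∑ k ∈ Ico m n, (N (k + 1) - N k) / max 1 (N k) ≤
      growthPotential c (N n) - growthPotential c (N m) :=
  calc ∑ k ∈ Ico m n, (N (k + 1) - N k) / max 1 (N k)
    _ ≤ ∑ k ∈ Ico m n, (growthPotential c (N (k + 1)) - growthPotential c (N k)) :=
        sum_le_sum fun k hk ↦
          sub_div_max_one_le_growthPotential_sub hc (hmono k hk) (hgrowth k hk)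
    _ = growthPotential c (N n) - growthPotential c (N m) :=
        sum_Ico_sub (fun k ↦ growthPotential c (N k)) hmn

end GrowthPotential

theorem logb_two_le_two_mul_log {x : ℝ} (hx : 1 ≤ x) : Real.logb 2 x ≤ 2 * Real.log x := by
  have half_le_log_two : 1 / 2 ≤ Real.log 2 := by linarith [Real.log_two_gt_d9]
  rw [Real.logb, div_le_iff₀ (Real.log_pos one_lt_two)]
  linarith [mul_le_mul_of_nonneg_left half_le_log_two (Real.log_nonneg hx)]

theorem sum_div_le_log_general
    {c : ℝ} (hc : 0 < c) (ν N : ℕ → ℝ) (hν0 : ∀ k, 1 ≤ k → 0 ≤ ν k)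
    (hN1 : 0 ≤ N 1) (hNrec : ∀ k, 1 ≤ k → N (k + 1) = N k + ν k)
    (hgrowth : ∀ k, 1 ≤ k → ν k ≤ c * max 1 (N k)) (K : ℕ) :
    ∑ k ∈ Icc 1 K, ν k / max 1 (N k) ≤ 1 + c * Real.logb (1 + c) (max 1 (N (K + 1))) := by
  have hν : ∀ k ∈ Ico 1 (K + 1), ν k = N (k + 1) - N k := fun k hk ↦
    eq_sub_of_add_eq' (hNrec k (mem_Ico.1 hk).1).symm
  calc ∑ k ∈ Icc 1 K, ν k / max 1 (N k)
    _ = ∑ k ∈ Ico 1 (K + 1), (N (k + 1) - N k) / max 1 (N k) := by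
        rw [← Ico_add_one_right_eq_Icc]
        exact sum_congr rfl fun k hk ↦ by rw [hν k hk]
    _ ≤ growthPotential c (N (K + 1)) - growthPotential c (N 1) :=
        sum_Ico_sub_div_max_one_le_growthPotential_sub hc (Nat.le_add_left 1 K)
          (fun k hk ↦ sub_nonneg.1 (hν k hk ▸ hν0 k (mem_Ico.1 hk).1))
          (fun k hk ↦ hν k hk ▸ hgrowth k (mem_Ico.1 hk).1)
    _ ≤ growthPotential c (N (K + 1)) := sub_le_self _ (growthPotential_nonneg hc.le hN1)
    _ ≤ 1 + c * Real.logb (1 + c) (max 1 (N (K + 1))) := growthPotential_le_one_add_mul_logb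

/-- Under the episode-doubling condition `ν_k ≤ max(1, N_k)`, where `N_1 = 0` and
`N_{k+1} = N_k + ν_k`, we have `∑_{k=1}^K ν_k / max(1, N_k) ≤ 2 + 2 ln(max(1, N_{K+1}))`. -/
theorem sum_div_le_log
    (ν N : ℕ → ℝ) (hν0 : ∀ k, 1 ≤ k → 0 ≤ ν k)
    (hN1 : N 1 = 0) (hNrec : ∀ k, 1 ≤ k → N (k + 1) = N k + ν k)
    (hdouble : ∀ k, 1 ≤ k → ν k ≤ max 1 (N k)) (K : ℕ) (hK : 1 ≤ K) :
    ∑ k ∈ Finset.Icc 1 K, ν k / max 1 (N k) ≤ 2 + 2 * Real.log (max 1 (N (K + 1))) := by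
  have h := sum_div_le_log_general one_pos ν N hν0 hN1.ge hNrec (by simpa only [one_mul]) K
  rw [one_mul, one_add_one_eq_two] at h
  linarith [logb_two_le_two_mul_log (le_max_left 1 (N (K + 1)))]
end

section
/- Let S be a finite nonempty set, let p̂ and q be probability vectors on S, let w : S → ℝ, let s, s' ∈ S, let g, r, ε, r_max, α, D be real numbers with α > 0, 0 ≤ ε ≤ r_max, D > 0, and suppose ‖w‖_∞ ≤ r_max·D/(2α), |g − r + α·(w(s) − ∑_{x} q(x)·w(x))| ≤ ε, and |r − g| ≤ r_max. Then α²·( w(s')² − (∑_{x} p̂(x)·w(x))² ) ≤ ( 2·r_max + α·|∑_{x} (q(x) − p̂(x))·w(x)| )·r_max·D + α²·( w(s')² − w(s)² ). -/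
open Finset

/-!
Factor `α² (w(s)² - P²) = α (w(s) - P) · α (w(s) + P)` with `P = p̂ᵀw`. The sup-norm bound on `w`
controls the second factor by `r_max D`. For the first, write
`α (w(s) - P) = (g - r + α (w(s) - qᵀw)) + (r - g) + α (q - p̂)ᵀw`: the approximate optimality
equation and the bound on `|r - g|` control the first two summands by `r_max` each.
-/

section Tsum

variable {ι R : Type*} [NonUnitalSeminormedRing R] {f g : ι → R} {K : ℝ}

theorem summable_mul_of_norm_le [CompleteSpace R] (hf : Summable fun i ↦ ‖f i‖)
    (hg : ∀ i, ‖g i‖ ≤ K) : Summable fun i ↦ f i * g i :=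
  (hf.mul_right K).of_norm_bounded fun i ↦ norm_mul_le_of_le le_rfl (hg i)

theorem norm_tsum_mul_le_of_norm_le (hf : Summable fun i ↦ ‖f i‖) (hg : ∀ i, ‖g i‖ ≤ K) :
    ‖∑' i, f i * g i‖ ≤ (∑' i, ‖f i‖) * K :=
  tsum_of_norm_bounded (hf.hasSum.mul_right K) fun i ↦ norm_mul_le_of_le le_rfl (hg i)

end Tsum

section OrderedRing

variable {R : Type*} [CommRing R] [LinearOrder R] [IsOrderedRing R]

theorem sq_sub_sq_le_mul_of_abs_le {a b c d : R} (hsub : |a - b| ≤ c) (hadd : |a + b| ≤ d) :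
    a ^ 2 - b ^ 2 ≤ c * d :=
  calc a ^ 2 - b ^ 2 = (a - b) * (a + b) := by ring
    _ ≤ |a - b| * |a + b| := (le_abs_self _).trans_eq (abs_mul _ _)
    _ ≤ c * d := by gcongr; exact (abs_nonneg _).trans hsub

theorem abs_mul_sub_le_of_abs_residual_le {α ε δ g r v P Q : R}
    (hres : |g - r + α * (v - Q)| ≤ ε) (hrg : |r - g| ≤ δ) :
    |α * (v - P)| ≤ ε + δ + |α * (Q - P)| :=
  calc |α * (v - P)| = |(g - r + α * (v - Q)) + (r - g) + α * (Q - P)| := by ring_nf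
    _ ≤ |g - r + α * (v - Q)| + |r - g| + |α * (Q - P)| := abs_add_three _ _ _
    _ ≤ ε + δ + |α * (Q - P)| := by gcongr

end OrderedRing

theorem variance_dominant_term_bound_general
    {S : Type*} {phat q w : S → ℝ} (hphat : Summable phat) (hphat1 : ∑' x, |phat x| ≤ 1)
    (hq : Summable q) (s s' : S) {g r ε rmax α D : ℝ} (hα : 0 < α) (hε : ε ≤ rmax)
    (hwinf : ∀ x, |w x| ≤ rmax * D / (2 * α))
    (hopt : |g - r + α * (w s - ∑' x, q x * w x)| ≤ ε) (hrg : |r - g| ≤ rmax) :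
    α ^ 2 * (w s' ^ 2 - (∑' x, phat x * w x) ^ 2) ≤
      (2 * rmax + α * |∑' x, (q x - phat x) * w x|) * (rmax * D) +
        α ^ 2 * (w s' ^ 2 - w s ^ 2) := by
  set P := ∑' x, phat x * w x
  set Q := ∑' x, q x * w x
  have hw : ∀ x, ‖w x‖ ≤ rmax * D / (2 * α) := hwinf
  have hQP : ∑' x, (q x - phat x) * w x = Q - P := by
    simp_rw [sub_mul]
    exact (summable_mul_of_norm_le hq.norm hw).tsum_sub (summable_mul_of_norm_le hphat.norm hw)
  have hP : |P| ≤ rmax * D / (2 * α) :=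
    (norm_tsum_mul_le_of_norm_le hphat.norm hw).trans
      (mul_le_of_le_one_left ((norm_nonneg _).trans (hw s)) hphat1)
  have hsub : |α * w s - α * P| ≤ 2 * rmax + α * |Q - P| :=
    calc |α * w s - α * P| = |α * (w s - P)| := by rw [mul_sub]
      _ ≤ rmax + rmax + |α * (Q - P)| := abs_mul_sub_le_of_abs_residual_le (hopt.trans hε) hrg
      _ = 2 * rmax + α * |Q - P| := by rw [two_mul, abs_mul, abs_of_pos hα]
  have hadd : |α * w s + α * P| ≤ rmax * D :=
    calc |α * w s + α * P| = α * |w s + P| := by rw [← mul_add, abs_mul, abs_of_pos hα]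
      _ ≤ α * (rmax * D / (2 * α) + rmax * D / (2 * α)) := by
        gcongr; exact (abs_add_le _ _).trans (add_le_add (hwinf s) hP)
      _ = rmax * D := by field_simp; ring
  rw [hQP]
  linarith [sq_sub_sq_le_mul_of_abs_le hsub hadd]

/-- Key step in bounding the dominant term of the sum of variances:
`α²(w(s')² − (p̂^⊺w)²) ≤ (2 r_max + α|(q − p̂)^⊺w|) r_max D + α²(w(s')² − w(s)²)`. -/
theorem variance_dominant_term_bound
    {S : Type*} [Fintype S] [Nonempty S] (phat q : S → ℝ)
    (hphat0 : ∀ x, 0 ≤ phat x) (hphat1 : ∑ x, phat x = 1)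
    (hq0 : ∀ x, 0 ≤ q x) (hq1 : ∑ x, q x = 1)
    (w : S → ℝ) (s s' : S) (g r ε rmax α D : ℝ)
    (hα : 0 < α) (hε0 : 0 ≤ ε) (hε : ε ≤ rmax) (hD : 0 < D)
    (hwinf : ∀ x, |w x| ≤ rmax * D / (2 * α))
    (hopt : |g - r + α * (w s - ∑ x, q x * w x)| ≤ ε)
    (hrg : |r - g| ≤ rmax) :
    α ^ 2 * (w s' ^ 2 - (∑ x, phat x * w x) ^ 2) ≤
      (2 * rmax + α * |∑ x, (q x - phat x) * w x|) * (rmax * D) +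
        α ^ 2 * (w s' ^ 2 - w s ^ 2) := by
  simpa using variance_dominant_term_bound_general .of_finite
    (by simp [abs_of_nonneg (hphat0 _), hphat1]) .of_finite s s' hα hε hwinf
    (by simpa using hopt) hrg
end
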